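/- Let i_s and i_e be composable input-enabled transition systems, let q_s' ∈ Q_{i_s}, q_e' ∈ Q_{i_e}, and let σ ∈ (L_{i_s∥i_e}^δ)*. Then i_s ∥ i_e ==σ==> q_s' ∥ q_e' if and only if i_s ==σ↾L_{i_s}^δ==> q_s' and i_e ==σ↾L_{i_e}^δ==> q_e'. -/

import Mathlib

/-- Labels extended with the quiescence label `δ`. -/
inductive ELabel (Lab : Type) : Type
  | lab : Lab → ELabel Lab
  | delta : ELabel Lab

namespace ELabel

/-- Membership of an extended label in `𝓛^δ = 𝓛 ∪ {δ}`. -/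
def inL {Lab : Type} (Ls : Set Lab) : ELabel Lab → Prop
  | lab ℓ => ℓ ∈ Ls
  | delta => True

end ELabel

/-- A trace lies in `(𝓛^δ)*`. -/
def TraceIn {Lab : Type} (Ls : Set Lab) (σ : List (ELabel Lab)) : Prop :=
  ∀ x ∈ σ, ELabel.inL Ls x

/-- A labelled transition system.  `T q none q'` is an internal `τ`-step,
`T q (some ℓ) q'` is a step labelled `ℓ`. -/
structure LTS (Q : Type) (Lab : Type) where
  I : Set Lab
  U : Set Lab
  T : Q → Option Lab → Q → Prop
  q0 : Q

namespace LTS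

variable {Q Lab : Type}

/-- The label set `L = I ∪ U`. -/
def L (M : LTS Q Lab) : Set Lab := M.I ∪ M.U

/-- Standing assumptions on all LTSs: countable, disjoint input/output label
sets, transitions labelled within `L`, strong convergence (no infinite
`τ`-sequences), and image-finiteness. -/
def WellFormed (M : LTS Q Lab) : Prop :=
  M.I.Countable ∧ M.U.Countable ∧ Disjoint M.I M.U ∧
  (∀ q ℓ q', M.T q (some ℓ) q' → ℓ ∈ M.L) ∧
  (¬ ∃ f : ℕ → Q, ∀ n, M.T (f n) none (f (n + 1))) ∧
  (∀ q a, {q' | M.T q a q'}.Finite)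

/-- A state is quiescent if neither an output nor `τ` is enabled in it. -/
def Quiescent (M : LTS Q Lab) (q : Q) : Prop :=
  (∀ x ∈ M.U, ∀ q', ¬ M.T q (some x) q') ∧ ∀ q', ¬ M.T q none q'

/-- A single visible step `q --x--> q'` for `x ∈ L^δ`, where the quiescence
label `δ` gives a self-loop at quiescent states. -/
def VStep (M : LTS Q Lab) (q : Q) : ELabel Lab → Q → Prop
  | .lab ℓ, q' => M.T q (some ℓ) q'
  | .delta, q' => q' = q ∧ M.Quiescent q

/-- Zero or more `τ`-steps: `q ==ε==> q'`. -/
def Eps (M : LTS Q Lab) : Q → Q → Prop :=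
  Relation.ReflTransGen fun a b => M.T a none b

/-- Weak transition `q ==σ==> q'` for `σ ∈ (L^δ)*`. -/
inductive W (M : LTS Q Lab) : Q → List (ELabel Lab) → Q → Prop
  | nil {q q' : Q} : M.Eps q q' → W M q [] q'
  | snoc {q q1 q2 q' : Q} {σ : List (ELabel Lab)} {x : ELabel Lab} :
      W M q σ q1 → M.VStep q1 x q2 → M.Eps q2 q' → W M q (σ ++ [x]) q'

/-- `X after σ`, for a set of states `X`. -/
def afterSet (M : LTS Q Lab) (X : Set Q) (σ : List (ELabel Lab)) : Set Q :=
  {q' | ∃ q ∈ X, M.W q σ q'}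

/-- `M after σ`, from the initial state. -/
def after (M : LTS Q Lab) (σ : List (ELabel Lab)) : Set Q :=
  {q' | M.W M.q0 σ q'}

/-- The predicate underlying `out(q) ⊆ U ∪ {δ}`. -/
def outLabel (M : LTS Q Lab) (q : Q) : ELabel Lab → Prop
  | .lab ℓ => ℓ ∈ M.U ∧ ∃ q', M.T q (some ℓ) q'
  | .delta => M.Quiescent q

/-- `out(q)`. -/
def outq (M : LTS Q Lab) (q : Q) : Set (ELabel Lab) :=
  {x | M.outLabel q x}

/-- `in(q) = {ℓ ∈ I | q ==ℓ==>}`. -/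
def inq (M : LTS Q Lab) (q : Q) : Set Lab :=
  {ℓ | ℓ ∈ M.I ∧ ∃ q', M.W q [ELabel.lab ℓ] q'}

/-- `out(X) = ⋃_{q ∈ X} out(q)`. -/
def outSet (M : LTS Q Lab) (X : Set Q) : Set (ELabel Lab) :=
  ⋃ q ∈ X, M.outq q

/-- `in(X) = ⋂_{q ∈ X} in(q)`. -/
def inSet (M : LTS Q Lab) (X : Set Q) : Set Lab :=
  ⋂ q ∈ X, M.inq q

/-- Input-enabledness: `M` is an IOTS. -/
def InputEnabled (M : LTS Q Lab) : Prop :=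
  ∀ q, ∀ ℓ ∈ M.I, ∃ q', M.W q [ELabel.lab ℓ] q'

/-- `Utraces(M)`. -/
def Utraces (M : LTS Q Lab) : Set (List (ELabel Lab)) :=
  {σ | TraceIn M.L σ ∧ (∃ q', M.W M.q0 σ q') ∧
    ∀ σ1 ℓ σ2, σ = σ1 ++ ELabel.lab ℓ :: σ2 → ℓ ∈ M.I →
      ∀ q, M.W M.q0 σ1 q → ∃ q', M.W q [ELabel.lab ℓ] q'}

/-- An LTS is utrace-closed when every trace over `(L^δ)*` that it can
perform is a utrace. -/
def UtraceClosed (M : LTS Q Lab) : Prop :=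
  ∀ σ : List (ELabel Lab), TraceIn M.L σ → (∃ q', M.W M.q0 σ q') → σ ∈ M.Utraces

end LTS

/-- `i uioco s`. -/
def Uioco {Qi Qs Lab : Type} (i : LTS Qi Lab) (s : LTS Qs Lab) : Prop :=
  ∀ σ ∈ s.Utraces, i.outSet (i.after σ) ⊆ s.outSet (s.after σ)

/-- Composability: disjoint output label sets. -/
def Composable {Qs Qe Lab : Type} (s : LTS Qs Lab) (e : LTS Qe Lab) : Prop :=
  s.U ∩ e.U = ∅

/-- Parallel composition `s ∥ e`. -/
def par {Qs Qe Lab : Type} (s : LTS Qs Lab) (e : LTS Qe Lab) : LTS (Qs × Qe) Lab where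
  I := (s.I \ e.U) ∪ (e.I \ s.U)
  U := s.U ∪ e.U
  T := fun p a p' =>
    match a with
    | none =>
        (s.T p.1 none p'.1 ∧ p'.2 = p.2) ∨ (e.T p.2 none p'.2 ∧ p'.1 = p.1)
    | some ℓ =>
        (ℓ ∈ s.L ∧ ℓ ∉ e.L ∧ s.T p.1 (some ℓ) p'.1 ∧ p'.2 = p.2) ∨
        (ℓ ∈ e.L ∧ ℓ ∉ s.L ∧ e.T p.2 (some ℓ) p'.2 ∧ p'.1 = p.1) ∨
        (ℓ ∈ s.L ∧ ℓ ∈ e.L ∧ s.T p.1 (some ℓ) p'.1 ∧ e.T p.2 (some ℓ) p'.2)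
  q0 := (s.q0, e.q0)

/-- `s accepts e`: along utraces of `s ∥ e`, every output of `e` that is an
input of `s` is (weakly) enabled in `s`. -/
def Accepts {Qs Qe Lab : Type} (s : LTS Qs Lab) (e : LTS Qe Lab) : Prop :=
  ∀ σ ∈ (par s e).Utraces, ∀ qs qe, (par s e).W (par s e).q0 σ (qs, qe) →
    ∀ ℓ, ELabel.lab ℓ ∈ e.outq qe → ℓ ∈ s.I → ℓ ∈ s.inq qs

/-- `s mutually accepts e`. -/
def MutuallyAccepts {Qs Qe Lab : Type} (s : LTS Qs Lab) (e : LTS Qe Lab) : Prop :=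
  Accepts s e ∧ Accepts e s

/-- `R` is an ecosim for `s` and `e`. -/
def IsEcosim {Qs Qe Lab : Type} (s : LTS Qs Lab) (e : LTS Qe Lab)
    (R : Set (Set Qs × Set Qe)) : Prop :=
  (s.after [], e.after []) ∈ R ∧
  ∀ Xs Xe, (Xs, Xe) ∈ R →
    (∀ ℓ, ELabel.lab ℓ ∈ e.outSet Xe → ℓ ∈ s.I →
      ℓ ∈ s.inSet Xs ∧
        (s.afterSet Xs [ELabel.lab ℓ], e.afterSet Xe [ELabel.lab ℓ]) ∈ R) ∧
    (∀ ℓ, ELabel.lab ℓ ∈ s.outSet Xs → ℓ ∈ e.I →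
      ℓ ∈ e.inSet Xe ∧
        (s.afterSet Xs [ELabel.lab ℓ], e.afterSet Xe [ELabel.lab ℓ]) ∈ R) ∧
    (∀ ℓ, (ELabel.lab ℓ ∈ e.outSet Xe ∨ ℓ ∈ e.inSet Xe) → ℓ ∉ s.L →
      (Xs, e.afterSet Xe [ELabel.lab ℓ]) ∈ R) ∧
    (∀ ℓ, (ELabel.lab ℓ ∈ s.outSet Xs ∨ ℓ ∈ s.inSet Xs) → ℓ ∉ e.L →
      (s.afterSet Xs [ELabel.lab ℓ], Xe) ∈ R) ∧
    (∀ ℓ, ℓ ∈ s.inSet Xs → ℓ ∈ e.inSet Xe →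
      (s.afterSet Xs [ELabel.lab ℓ], e.afterSet Xe [ELabel.lab ℓ]) ∈ R) ∧
    (ELabel.delta ∈ s.outSet Xs → ELabel.delta ∈ e.outSet Xe →
      (s.afterSet Xs [ELabel.delta], e.afterSet Xe [ELabel.delta]) ∈ R)

/-- `s eco e`: there exists an ecosim for `s` and `e`. -/
def Eco {Qs Qe Lab : Type} (s : LTS Qs Lab) (e : LTS Qe Lab) : Prop :=
  ∃ R, IsEcosim s e R

/-- `R_U(s,e)`: the smallest relation closed under the given rules. -/
inductive RU {Qs Qe Lab : Type} (s : LTS Qs Lab) (e : LTS Qe Lab) :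
    Set Qs → Set Qe → Prop
  | base : RU s e (s.after []) (e.after [])
  | syncOutE {Xs : Set Qs} {Xe : Set Qe} (ℓ : Lab) :
      RU s e Xs Xe → ELabel.lab ℓ ∈ e.outSet Xe → ℓ ∈ s.I →
      RU s e (s.afterSet Xs [ELabel.lab ℓ]) (e.afterSet Xe [ELabel.lab ℓ])
  | syncOutS {Xs : Set Qs} {Xe : Set Qe} (ℓ : Lab) :
      RU s e Xs Xe → ELabel.lab ℓ ∈ s.outSet Xs → ℓ ∈ e.I →
      RU s e (s.afterSet Xs [ELabel.lab ℓ]) (e.afterSet Xe [ELabel.lab ℓ])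
  | internalE {Xs : Set Qs} {Xe : Set Qe} (ℓ : Lab) :
      RU s e Xs Xe → (ELabel.lab ℓ ∈ e.outSet Xe ∨ ℓ ∈ e.inSet Xe) → ℓ ∉ s.L →
      RU s e Xs (e.afterSet Xe [ELabel.lab ℓ])
  | internalS {Xs : Set Qs} {Xe : Set Qe} (ℓ : Lab) :
      RU s e Xs Xe → (ELabel.lab ℓ ∈ s.outSet Xs ∨ ℓ ∈ s.inSet Xs) → ℓ ∉ e.L →
      RU s e (s.afterSet Xs [ELabel.lab ℓ]) Xe
  | syncIn {Xs : Set Qs} {Xe : Set Qe} (ℓ : Lab) :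
      RU s e Xs Xe → ℓ ∈ s.inSet Xs → ℓ ∈ e.inSet Xe →
      RU s e (s.afterSet Xs [ELabel.lab ℓ]) (e.afterSet Xe [ELabel.lab ℓ])
  | qdelta {Xs : Set Qs} {Xe : Set Qe} :
      RU s e Xs Xe → ELabel.delta ∈ s.outSet Xs → ELabel.delta ∈ e.outSet Xe →
      RU s e (s.afterSet Xs [ELabel.delta]) (e.afterSet Xe [ELabel.delta])

open Classical in
/-- Projection `σ↾𝓛^δ` of a trace onto an (extended) label set: keeps `δ`
and the labels in `Ls`, removes all other labels. -/
noncomputable def projD {Lab : Type} (σ : List (ELabel Lab)) (Ls : Set Lab) :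
    List (ELabel Lab) :=
  σ.filter fun x => decide (ELabel.inL Ls x)

open Classical in
/-- Projection `σ↾𝓛` of a trace of plain labels onto a label set. -/
noncomputable def projL {Lab : Type} (σ : List Lab) (Ls : Set Lab) : List Lab :=
  σ.filter fun ℓ => decide (ℓ ∈ Ls)

open Classical in
/-- Substitution `σ[θ/δ]` of the label `θ` by the quiescence label `δ`. -/
noncomputable def substTheta {Lab : Type} (θ : Lab) (σ : List Lab) :
    List (ELabel Lab) :=
  σ.map fun ℓ => if ℓ = θ then ELabel.delta else ELabel.lab ℓ

/-- `⟨X⟩`: componentwise collection of a set of pairs of states. -/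
def collect {Qs Qe : Type} (X : Set (Qs × Qe)) : Set Qs × Set Qe :=
  (Prod.fst '' X, Prod.snd '' X)

/-- `q_s accepts q_e over σ`. -/
def AcceptsOver {Qs Qe Lab : Type} (s : LTS Qs Lab) (e : LTS Qe Lab)
    (qs : Qs) (qe : Qe) (σ : List (ELabel Lab)) : Prop :=
  ∀ σ1 σ2 : List (ELabel Lab), σ1 ++ σ2 = σ →
    ∀ (qs' : Qs) (qe' : Qe), (par s e).W (qs, qe) σ1 (qs', qe') →
      ∀ ℓ, ELabel.lab ℓ ∈ e.outq qe' → ℓ ∈ s.I → ℓ ∈ s.inq qs' ∧ ℓ ∈ e.U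

/-- `q_s mutually accepts q_e over σ`. -/
def MutuallyAcceptsOver {Qs Qe Lab : Type} (s : LTS Qs Lab) (e : LTS Qe Lab)
    (qs : Qs) (qe : Qe) (σ : List (ELabel Lab)) : Prop :=
  AcceptsOver s e qs qe σ ∧ AcceptsOver e s qe qs σ

/-- A test case: a quasi-finite tree-shaped LTS without `τ`-transitions, with
terminal states `pass` and `fail` carrying input self-loops, a special
quiescence-observation input `θ`, at most one output transition per state,
and receptive to all inputs other than `θ`. -/
structure TestCase (Qt Lab : Type) extends LTS Qt Lab where
  passS : Qt
  failS : Qt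
  theta : Lab
  theta_input : theta ∈ I
  no_tau : ∀ q q', ¬ T q none q'
  tree : ∀ q, q ≠ q0 → q ≠ passS → q ≠ failS →
    ∃! p : Qt × Option Lab, T p.1 p.2 q
  pass_loops : ∀ ℓ ∈ I, T passS (some ℓ) passS
  pass_terminal : ∀ a q', T passS a q' → q' = passS ∧ ∃ ℓ ∈ I, a = some ℓ
  fail_loops : ∀ ℓ ∈ I, T failS (some ℓ) failS
  fail_terminal : ∀ a q', T failS a q' → q' = failS ∧ ∃ ℓ ∈ I, a = some ℓ
  one_output : ∀ q ℓ ℓ' q' q'', ℓ ∈ U → ℓ' ∈ U →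
    T q (some ℓ) q' → T q (some ℓ') q'' → ℓ = ℓ' ∧ q' = q''
  receptive : ∀ q, ∀ ℓ ∈ I, ℓ ≠ theta → ∃ q', T q (some ℓ) q'

/-- Test execution `t ⫿ i` of a test case `t` with an implementation `i`. -/
def testExec {Qt Qi Lab : Type} (t : TestCase Qt Lab) (i : LTS Qi Lab) :
    LTS (Qt × Qi) Lab where
  I := ∅
  U := i.U ∪ (t.toLTS.L \ {t.theta})
  T := fun p a p' =>
    match a with
    | none => i.T p.2 none p'.2 ∧ p'.1 = p.1
    | some ℓ =>
        (ℓ ∈ i.L ∧ ℓ ∉ t.toLTS.L ∧ i.T p.2 (some ℓ) p'.2 ∧ p'.1 = p.1) ∨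
        (ℓ ∈ t.toLTS.L ∧ ℓ ∉ i.L ∧ ℓ ≠ t.theta ∧ t.T p.1 (some ℓ) p'.1 ∧ p'.2 = p.2) ∨
        (ℓ ∈ i.L ∧ ℓ ∈ t.toLTS.L ∧ t.T p.1 (some ℓ) p'.1 ∧ i.T p.2 (some ℓ) p'.2) ∨
        (ℓ = t.theta ∧ t.T p.1 (some ℓ) p'.1 ∧ p'.2 = p.2 ∧ i.Quiescent p.2)
  q0 := (t.q0, i.q0)

/-!
While `s ∥ e` performs a visible step labelled `x`, each component either performs `x` itself, when
`x` belongs to its extended alphabet, or stands still. Projecting a trace onto the alphabet of a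
component erases exactly the steps at which it stands still, and `τ`-steps interleave freely, so
the equivalence follows by induction on the trace once single steps decompose. The delicate label
is `δ`: a quiescent composition could hide an output of one component that the other refuses to
synchronise on. Composability makes that output an input of the other component, and an
input-enabled state without `τ`-steps accepts every input directly, so this cannot happen.
-/

theorem projD_append_singleton_of_inL {Lab : Type} {Ls : Set Lab} {x : ELabel Lab}
    (hx : x.inL Ls) (σ : List (ELabel Lab)) : projD (σ ++ [x]) Ls = projD σ Ls ++ [x] := by
  simp [projD, hx]

theorem projD_append_singleton_of_not_inL {Lab : Type} {Ls : Set Lab} {x : ELabel Lab}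
    (hx : ¬ x.inL Ls) (σ : List (ELabel Lab)) : projD (σ ++ [x]) Ls = projD σ Ls := by
  simp [projD, hx]

namespace LTS

section WeakTransition

variable {Q Lab : Type} {M : LTS Q Lab} {q q' : Q} {σ : List (ELabel Lab)} {x : ELabel Lab}

theorem w_nil_iff : M.W q [] q' ↔ M.Eps q q' := by
  refine ⟨fun h => ?_, W.nil⟩
  generalize hσ : ([] : List (ELabel Lab)) = σ at h
  cases h with
  | nil hε => exact hε
  | snoc => simp at hσ

theorem w_append_singleton_iff :
    M.W q (σ ++ [x]) q' ↔ ∃ q₁ q₂, M.W q σ q₁ ∧ M.VStep q₁ x q₂ ∧ M.Eps q₂ q' := by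
  refine ⟨fun h => ?_, fun ⟨_, _, hσ, hx, hε⟩ => hσ.snoc hx hε⟩
  generalize hρ : σ ++ [x] = ρ at h
  cases h with
  | nil => simp at hρ
  | snoc hσ hx hε =>
    obtain ⟨rfl, rfl⟩ := List.append_singleton_inj.mp hρ
    exact ⟨_, _, hσ, hx, hε⟩

theorem W.trans_eps {q₁ : Q} (h : M.W q σ q₁) (hε : M.Eps q₁ q') : M.W q σ q' := by
  cases h with
  | nil hε₁ => exact .nil (hε₁.trans hε)
  | snoc hσ hx hε₁ => exact .snoc hσ hx (hε₁.trans hε)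

theorem InputEnabled.exists_T_of_no_tau (hM : M.InputEnabled) (hτ : ∀ q', ¬ M.T q none q')
    {ℓ : Lab} (hℓ : ℓ ∈ M.I) : ∃ q', M.T q (some ℓ) q' := by
  obtain ⟨_, hW⟩ := hM q ℓ hℓ
  obtain ⟨q₁, q₂, hnil, hstep, -⟩ := w_append_singleton_iff (σ := []).mp hW
  obtain rfl | ⟨_, hfirst, -⟩ := (w_nil_iff.mp hnil).cases_head
  · exact ⟨q₂, hstep⟩
  · exact absurd hfirst (hτ _)

/-- The contribution of a component `M` to a visible step labelled `x` of a parallel composition: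
`M` takes the step if `x ∈ L^δ`, and stays where it is otherwise. -/
def StepOrIdle (M : LTS Q Lab) (q : Q) (x : ELabel Lab) (q' : Q) : Prop :=
  (x.inL M.L ∧ M.VStep q x q') ∨ (¬ x.inL M.L ∧ q' = q)

theorem stepOrIdle_iff_vStep (hx : x.inL M.L) : M.StepOrIdle q x q' ↔ M.VStep q x q' := by
  simp [StepOrIdle, hx]

theorem stepOrIdle_iff_eq (hx : ¬ x.inL M.L) : M.StepOrIdle q x q' ↔ q' = q := by
  simp [StepOrIdle, hx]

theorem InputEnabled.exists_stepOrIdle (hM : M.InputEnabled) (hτ : ∀ q', ¬ M.T q none q')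
    {ℓ : Lab} (hℓ : ℓ ∉ M.U) : ∃ q', M.StepOrIdle q (.lab ℓ) q' := by
  by_cases hL : ℓ ∈ M.L
  · obtain ⟨q', hstep⟩ := hM.exists_T_of_no_tau hτ (hL.resolve_right hℓ)
    exact ⟨q', .inl ⟨hL, hstep⟩⟩
  · exact ⟨q, .inr ⟨hL, rfl⟩⟩

theorem w_projD_append_singleton_iff :
    M.W q (projD (σ ++ [x]) M.L) q' ↔
      ∃ q₁ q₂, M.W q (projD σ M.L) q₁ ∧ M.StepOrIdle q₁ x q₂ ∧ M.Eps q₂ q' := by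
  by_cases hx : x.inL M.L
  · simp only [projD_append_singleton_of_inL hx, w_append_singleton_iff, stepOrIdle_iff_vStep hx]
  · simp only [projD_append_singleton_of_not_inL hx, stepOrIdle_iff_eq hx]
    constructor
    · exact fun hW => ⟨q', q', hW, rfl, .refl⟩
    · rintro ⟨_, _, hW, rfl, hε⟩
      exact hW.trans_eps hε

end WeakTransition

end LTS

section ParallelComposition

variable {Qs Qe Lab : Type} {s : LTS Qs Lab} {e : LTS Qe Lab} {p p' : Qs × Qe}

theorem Composable.symm (h : Composable s e) : Composable e s :=
  (Set.inter_comm _ _).trans h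

theorem par_L : (par s e).L = s.L ∪ e.L := by
  ext ℓ
  simp only [LTS.L, par, Set.mem_union, Set.mem_sdiff]
  tauto

theorem par_T_swap_iff {a : Option Lab} :
    (par e s).T p.swap a p'.swap ↔ (par s e).T p a p' := by
  cases a <;> simp only [par, Prod.fst_swap, Prod.snd_swap] <;> tauto

theorem par_eps_iff : (par s e).Eps p p' ↔ s.Eps p.1 p'.1 ∧ e.Eps p.2 p'.2 := by
  constructor
  · intro h
    induction h with
    | refl => exact ⟨.refl, .refl⟩
    | tail _ hτ ih =>
      obtain ⟨hs, he⟩ | ⟨he, hs⟩ := hτ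
      · exact ⟨ih.1.tail hs, he ▸ ih.2⟩
      · exact ⟨hs ▸ ih.1, ih.2.tail he⟩
  · rintro ⟨hs, he⟩
    have left_moves : (par s e).Eps p (p'.1, p.2) :=
      hs.lift (fun q => (q, p.2)) fun _ _ hτ => .inl ⟨hτ, rfl⟩
    have right_moves : (par s e).Eps (p'.1, p.2) p' :=
      he.lift (fun q => (p'.1, q)) fun _ _ hτ => .inr ⟨hτ, rfl⟩
    exact left_moves.trans right_moves

theorem par_T_some_iff {ℓ : Lab} (hℓ : ℓ ∈ (par s e).L) :
    (par s e).T p (some ℓ) p' ↔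
      s.StepOrIdle p.1 (.lab ℓ) p'.1 ∧ e.StepOrIdle p.2 (.lab ℓ) p'.2 := by
  rw [par_L, Set.mem_union] at hℓ
  simp only [par, LTS.StepOrIdle, LTS.VStep, ELabel.inL]
  tauto

theorem par_quiescent (hs : s.Quiescent p.1) (he : e.Quiescent p.2) : (par s e).Quiescent p := by
  refine ⟨fun ℓ hℓ p' hstep => ?_, fun p' hτ => ?_⟩
  · obtain ⟨hstep_s, hstep_e⟩ := (par_T_some_iff (.inr hℓ)).mp hstep
    obtain hℓ | hℓ := hℓ
    · exact hs.1 ℓ hℓ _ ((LTS.stepOrIdle_iff_vStep (x := .lab ℓ) (Or.inr hℓ)).mp hstep_s)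
    · exact he.1 ℓ hℓ _ ((LTS.stepOrIdle_iff_vStep (x := .lab ℓ) (Or.inr hℓ)).mp hstep_e)
  · obtain ⟨hτ, -⟩ | ⟨hτ, -⟩ := hτ
    · exact hs.2 _ hτ
    · exact he.2 _ hτ

theorem LTS.Quiescent.fst_of_par (h : (par s e).Quiescent p) (he : e.InputEnabled)
    (hcomp : Composable s e) : s.Quiescent p.1 := by
  have no_tau_e : ∀ q, ¬ e.T p.2 none q := fun q hτ => h.2 (p.1, q) (.inr ⟨hτ, rfl⟩)
  refine ⟨fun ℓ hℓ q hstep => ?_, fun q hτ => h.2 (q, p.2) (.inl ⟨hτ, rfl⟩)⟩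
  have not_output_e : ℓ ∉ e.U := (Set.disjoint_iff_inter_eq_empty.mpr hcomp).notMem_of_mem_left hℓ
  obtain ⟨r, hr⟩ := he.exists_stepOrIdle no_tau_e not_output_e
  exact h.1 ℓ (.inl hℓ) (q, r)
    ((par_T_some_iff (.inr (.inl hℓ))).mpr ⟨.inl ⟨.inr hℓ, hstep⟩, hr⟩)

theorem LTS.Quiescent.par_swap (h : (par s e).Quiescent p) : (par e s).Quiescent p.swap :=
  ⟨fun ℓ hℓ p' hstep => h.1 ℓ hℓ.symm p'.swap (par_T_swap_iff.mp hstep),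
    fun p' hτ => h.2 p'.swap (par_T_swap_iff.mp hτ)⟩

theorem par_quiescent_iff (hs : s.InputEnabled) (he : e.InputEnabled) (hcomp : Composable s e) :
    (par s e).Quiescent p ↔ s.Quiescent p.1 ∧ e.Quiescent p.2 :=
  ⟨fun h => ⟨h.fst_of_par he hcomp, h.par_swap.fst_of_par hs hcomp.symm⟩,
    fun h => par_quiescent h.1 h.2⟩

theorem par_vStep_iff (hs : s.InputEnabled) (he : e.InputEnabled) (hcomp : Composable s e)
    {x : ELabel Lab} (hx : x.inL (par s e).L) :
    (par s e).VStep p x p' ↔ s.StepOrIdle p.1 x p'.1 ∧ e.StepOrIdle p.2 x p'.2 := by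
  cases x with
  | lab ℓ => exact par_T_some_iff hx
  | delta =>
    simp only [LTS.StepOrIdle, ELabel.inL, LTS.VStep, par_quiescent_iff hs he hcomp, Prod.ext_iff]
    tauto

theorem project_from_parcomp_IOTS_general (hs : s.InputEnabled) (he : e.InputEnabled)
    (hcomp : Composable s e) {σ : List (ELabel Lab)} (hσ : TraceIn (par s e).L σ) :
    (par s e).W p σ p' ↔ s.W p.1 (projD σ s.L) p'.1 ∧ e.W p.2 (projD σ e.L) p'.2 := by
  induction σ using List.reverseRecOn generalizing p' with
  | nil => simp only [projD, List.filter_nil, LTS.w_nil_iff, par_eps_iff]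
  | append_singleton σ x ih =>
    obtain ⟨hσ, hx⟩ := List.forall_mem_append.mp hσ
    have hx : x.inL (par s e).L := List.forall_mem_singleton.mp hx
    simp only [LTS.w_append_singleton_iff, LTS.w_projD_append_singleton_iff, ih hσ,
      par_vStep_iff hs he hcomp hx, par_eps_iff]
    constructor
    · rintro ⟨p₁, p₂, ⟨hσs, hσe⟩, ⟨hxs, hxe⟩, hεs, hεe⟩
      exact ⟨⟨p₁.1, p₂.1, hσs, hxs, hεs⟩, ⟨p₁.2, p₂.2, hσe, hxe, hεe⟩⟩
    · rintro ⟨⟨s₁, s₂, hσs, hxs, hεs⟩, ⟨e₁, e₂, hσe, hxe, hεe⟩⟩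
      exact ⟨(s₁, e₁), (s₂, e₂), ⟨hσs, hσe⟩, ⟨hxs, hxe⟩, hεs, hεe⟩

end ParallelComposition

/-- for composable input-enabled `i_s`, `i_e` and
`σ ∈ (L_{i_s∥i_e}^δ)*`:  `i_s ∥ i_e ==σ==> q_s' ∥ q_e'` iff
`i_s ==σ↾L_{i_s}^δ==> q_s'` and `i_e ==σ↾L_{i_e}^δ==> q_e'`. -/
theorem project_from_parcomp_IOTS {Qis Qie Lab : Type}
    (iS : LTS Qis Lab) (iE : LTS Qie Lab)
    (hiS : iS.WellFormed) (hiE : iE.WellFormed)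
    (hiSenabled : iS.InputEnabled) (hiEenabled : iE.InputEnabled)
    (hcomp : Composable iS iE)
    (σ : List (ELabel Lab)) (hσ : TraceIn (par iS iE).L σ)
    (qs' : Qis) (qe' : Qie) :
    (par iS iE).W (par iS iE).q0 σ (qs', qe') ↔
      iS.W iS.q0 (projD σ iS.L) qs' ∧ iE.W iE.q0 (projD σ iE.L) qe' :=
  project_from_parcomp_IOTS_general hiSenabled hiEenabled hcomp hσ
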